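/- arXiv:1209.0585 — 3 statements merged into one kernel-verified Lean document; each statement's English description precedes it below -/
import Mathlib

section
/- The left real matrix representation Γ is multiplicative with respect to the complex-quaternion product: for all pairs X = (x, y) and A = (a, b) of real quaternions, Γ(X·A) = Γ(X)·Γ(A), where X·A = (xa − y*b, x*b + ya). -/
open Quaternion Matrix

noncomputable def lm (a : ℍ[ℝ]) : Matrix (Fin 4) (Fin 4) ℝ :=
  !![a.re, -a.imI, -a.imJ, -a.imK;
     a.imI, a.re, -a.imK, a.imJ;
     a.imJ, a.imK, a.re, -a.imI;
     a.imK, -a.imJ, a.imI, a.re]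

/-- The star operation a* = a₀ + a₁e₁ − a₂e₂ − a₃e₃. -/
noncomputable def st (a : ℍ[ℝ]) : ℍ[ℝ] := ⟨a.re, a.imI, -a.imJ, -a.imK⟩

/-- The left real matrix representation of the complex quaternion X = x + iy. -/
noncomputable def Gamma (x y : ℍ[ℝ]) : Matrix (Fin 4 ⊕ Fin 4) (Fin 4 ⊕ Fin 4) ℝ :=
  Matrix.fromBlocks (lm x) (-(lm (st y))) (lm y) (lm (st x))

theorem lm_mul (a b : ℍ[ℝ]) : lm (a * b) = lm a * lm b := by
  ext i j
  fin_cases i <;> fin_cases j <;>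
    simp [lm, Matrix.mul_apply, Fin.sum_univ_four] <;> ring

theorem lm_add (a b : ℍ[ℝ]) : lm (a + b) = lm a + lm b := by
  ext i j
  fin_cases i <;> fin_cases j <;> simp [lm] <;> ring

theorem lm_sub (a b : ℍ[ℝ]) : lm (a - b) = lm a - lm b := by
  ext i j
  fin_cases i <;> fin_cases j <;> simp [lm] <;> ring

theorem st_re (a : ℍ[ℝ]) : (st a).re = a.re := rfl

theorem st_imI (a : ℍ[ℝ]) : (st a).imI = a.imI := rfl

theorem st_imJ (a : ℍ[ℝ]) : (st a).imJ = -a.imJ := rfl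

theorem st_imK (a : ℍ[ℝ]) : (st a).imK = -a.imK := rfl

theorem st_mul (a b : ℍ[ℝ]) : st (a * b) = st a * st b := by
  ext <;> simp [st_re, st_imI, st_imJ, st_imK] <;> ring

theorem st_add (a b : ℍ[ℝ]) : st (a + b) = st a + st b := by
  ext <;> simp [st_re, st_imI, st_imJ, st_imK] <;> ring

theorem st_sub (a b : ℍ[ℝ]) : st (a - b) = st a - st b := by
  ext <;> simp [st_re, st_imI, st_imJ, st_imK] <;> ring

theorem st_st (a : ℍ[ℝ]) : st (st a) = a := by
  ext <;> simp [st_re, st_imI, st_imJ, st_imK]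

theorem Gamma_mul (x y a b : ℍ[ℝ]) :
    Gamma (x * a - st y * b) (st x * b + y * a) = Gamma x y * Gamma a b := by
  unfold Gamma
  rw [Matrix.fromBlocks_multiply]
  simp only [st_add, st_sub, st_mul, st_st, lm_add, lm_sub, lm_mul]
  congr 1
  · rw [Matrix.neg_mul, sub_eq_add_neg]
  · rw [Matrix.mul_neg, Matrix.neg_mul, neg_add]
  · rw [add_comm]
  · rw [Matrix.mul_neg, sub_eq_add_neg, add_comm]
end

section
/- For all complex quaternions A and B, the 8×8 real matrices Γ(A) and P·Θ(B)·P commute, where P is the 8×8 block-diagonal matrix diag(I₄, α) with α = diag(1, 1, −1, −1): Γ(A)·P·Θ(B)·P = P·Θ(B)·P·Γ(A). -/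
open Quaternion Matrix

noncomputable def rm (a : ℍ[ℝ]) : Matrix (Fin 4) (Fin 4) ℝ :=
  !![a.re, -a.imI, -a.imJ, -a.imK;
     a.imI, a.re, a.imK, -a.imJ;
     a.imJ, -a.imK, a.re, a.imI;
     a.imK, a.imJ, -a.imI, a.re]

/-- The right real matrix representation of the complex quaternion X = x + iy. -/
noncomputable def Theta (x y : ℍ[ℝ]) : Matrix (Fin 4 ⊕ Fin 4) (Fin 4 ⊕ Fin 4) ℝ :=
  Matrix.fromBlocks (rm x) (-(rm y)) (rm (st y)) (rm (st x))

/-- The 4×4 diagonal matrix α = diag(1, 1, −1, −1). -/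
noncomputable def α : Matrix (Fin 4) (Fin 4) ℝ :=
  !![1, 0, 0, 0;
     0, 1, 0, 0;
     0, 0, -1, 0;
     0, 0, 0, -1]

/-- The 8×8 block-diagonal matrix P = diag(I₄, α). -/
noncomputable def P : Matrix (Fin 4 ⊕ Fin 4) (Fin 4 ⊕ Fin 4) ℝ :=
  Matrix.fromBlocks 1 0 0 α

theorem lm_rm_comm (a b : ℍ[ℝ]) : lm a * rm b = rm b * lm a := by
  ext i j
  fin_cases i <;> fin_cases j <;>
    simp [lm, rm, Matrix.mul_apply, Fin.sum_univ_four] <;> ring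

theorem alpha_lm (a : ℍ[ℝ]) : α * lm a = lm (st a) * α := by
  ext i j
  fin_cases i <;> fin_cases j <;>
    simp [lm, α, st, Matrix.mul_apply, Fin.sum_univ_four]

theorem alpha_rm (a : ℍ[ℝ]) : α * rm (st a) = rm a * α := by
  ext i j
  fin_cases i <;> fin_cases j <;>
    simp [rm, α, st, Matrix.mul_apply, Fin.sum_univ_four]

theorem alpha_sq : α * α = 1 := by
  ext i j
  fin_cases i <;> fin_cases j <;>
    simp [α, Matrix.mul_apply, Fin.sum_univ_four]

theorem PThetaP_eq (c d : ℍ[ℝ]) : P * Theta c d * P =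
    Matrix.fromBlocks (rm c) (-(rm d * α)) (rm d * α) (rm c) := by
  simp [P, Theta, Matrix.fromBlocks_multiply, alpha_rm, Matrix.mul_assoc, alpha_sq]

theorem Gamma_commutes_PThetaP (a b c d : ℍ[ℝ]) :
    Gamma a b * (P * Theta c d * P) = (P * Theta c d * P) * Gamma a b := by
  have e1 : ∀ x y : ℍ[ℝ], lm x * (rm y * α) = rm y * (α * lm (st x)) := by
    intro x y
    rw [alpha_lm, st_st, ← Matrix.mul_assoc, lm_rm_comm, Matrix.mul_assoc]
  rw [PThetaP_eq, Gamma, Matrix.fromBlocks_multiply, Matrix.fromBlocks_multiply]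
  simp only [Matrix.mul_neg, Matrix.neg_mul, Matrix.mul_assoc, e1, st_st, lm_rm_comm, neg_neg]
  congr 1 <;> abel
end

section
/- For every complex quaternion X = (x, y), the transpose of Γ(X) satisfies Γ(X)ᵗ = M₁·Θ(X)·M₂, where M₁ = diag(−A₁, A₁), M₂ = diag(−A₂, A₂) are 8×8 block-diagonal real matrices, A₁ is the 4×4 matrix with rows (0,−1,0,0), (−1,0,0,0), (0,0,0,1), (0,0,−1,0), and A₂ is the 4×4 matrix with rows (0,−1,0,0), (−1,0,0,0), (0,0,0,−1), (0,0,1,0). In particular, A₁·ρ(a)·A₂ = λ(a)ᵗ for every real quaternion a. -/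
open Quaternion Matrix

noncomputable def A1 : Matrix (Fin 4) (Fin 4) ℝ :=
  !![0, -1, 0, 0;
     -1, 0, 0, 0;
     0, 0, 0, 1;
     0, 0, -1, 0]

noncomputable def A2 : Matrix (Fin 4) (Fin 4) ℝ :=
  !![0, -1, 0, 0;
     -1, 0, 0, 0;
     0, 0, 0, -1;
     0, 0, 1, 0]

noncomputable def M1 : Matrix (Fin 4 ⊕ Fin 4) (Fin 4 ⊕ Fin 4) ℝ :=
  Matrix.fromBlocks (-A1) 0 0 A1

noncomputable def M2 : Matrix (Fin 4 ⊕ Fin 4) (Fin 4 ⊕ Fin 4) ℝ :=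
  Matrix.fromBlocks (-A2) 0 0 A2

theorem A_aux (a : ℍ[ℝ]) : A1 * rm a * A2 = (lm a)ᵀ := by
  ext i j
  fin_cases i <;> fin_cases j <;>
    simp [A1, A2, rm, lm, Matrix.mul_apply, Fin.sum_univ_four]

theorem Gamma_transpose (x y : ℍ[ℝ]) :
    (Gamma x y)ᵀ = M1 * Theta x y * M2 ∧
    ∀ a : ℍ[ℝ], A1 * rm a * A2 = (lm a)ᵀ := by 
  refine ⟨?_, A_aux⟩
  simp [Gamma, Theta, M1, M2, Matrix.fromBlocks_transpose, Matrix.fromBlocks_multiply, ← A_aux]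
end
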